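/- Smoothed Rényi hash bound (key step of Theorem 6): Let X, Z, S be finite sets, F a universal-2 hash family of functions from X to S with F drawn uniformly, P_XZ a probability distribution on X × Z, R_Z a probability distribution on Z whose support contains the support of P_Z, r ∈ ℝ, and 0 ≤ θ ≤ 1. Define the sub-normalized function P̄_XZ(x,z) = P_XZ(x,z) · 1[−log(P_XZ(x,z)/R_Z(z)) > r]. Then E_F[d(F|P̄_XZ)] ≤ sqrt(|S| · e^{−θ H_{1+θ}(P_XZ|R_Z) − (1−θ) r}) (with θ H_{1+θ} interpreted as 0 when θ = 0). -/

import Mathlib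

/-!
For a non-negative `Q` with `Q(x,z) = 0` whenever `R(z) = 0`, the leftover hash lemma gives
`(2 E d(F|Q))² ≤ |S| ∑ Q(x,z)² / R(z)`. It combines the Cauchy–Schwarz inequality, weighted by `R`,
with a collision count: for fixed `z` the squared deviation of the key distribution from uniform is
`∑_{x,x'} Q(x,z) Q(x',z) 1[f x = f x'] - Q_Z(z)² / |S|`, and after averaging over a universal-2
family only the diagonal `x = x'` contributes beyond `Q_Z(z)² / |S|`.

For `Q = P̄`, the restriction of `P` to `P / R < e^{-r}`, every nonzero term satisfies
`P² / R = R (P/R)^{1+θ} (P/R)^{1-θ} ≤ R (P/R)^{1+θ} e^{-(1-θ) r}`,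
and summing produces the Rényi entropy.
-/

open Real Finset

/-- Variational distance `d(P,Q) = (1/2) ∑ |P a - Q a|`. -/
noncomputable def vdist {A : Type*} [Fintype A] (P Q : A → ℝ) : ℝ :=
  (1 / 2) * ∑ a, |P a - Q a|

/-- Sub-normalized non-negative function. -/
def Subnormalized {A : Type*} [Fintype A] (P : A → ℝ) : Prop :=
  (∀ a, 0 ≤ P a) ∧ ∑ a, P a ≤ 1

/-- Probability distribution on a finite set. -/
def IsDist {A : Type*} [Fintype A] (P : A → ℝ) : Prop :=
  (∀ a, 0 ≤ P a) ∧ ∑ a, P a = 1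

/-- Z-marginal `P_Z(z) = ∑_x P(x,z)`. -/
noncomputable def margZ {X Z : Type*} [Fintype X] (P : X × Z → ℝ) : Z → ℝ :=
  fun z => ∑ x, P (x, z)

/-- Key distribution `P_SZ(s,z) = ∑_{x ∈ f⁻¹(s)} P(x,z)`. -/
noncomputable def keyDist {X Z S : Type*} [Fintype X] [DecidableEq S]
    (f : X → S) (P : X × Z → ℝ) : S × Z → ℝ :=
  fun sz => ∑ x, if f x = sz.1 then P (x, sz.2) else 0

/-- Security `d(f|P_XZ) = d(P_SZ, P_unif × P_Z)`. -/
noncomputable def security {X Z S : Type*} [Fintype X] [Fintype Z] [Fintype S] [DecidableEq S]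
    (f : X → S) (P : X × Z → ℝ) : ℝ :=
  vdist (keyDist f P) (fun sz => (Fintype.card S : ℝ)⁻¹ * margZ P sz.2)

/-- Universal-2 hash family indexed by `I`: for `x ≠ x'`,
`Pr[F(x) = F(x')] ≤ 1/|S|` where `F` is uniform on `I`. -/
def Universal2 {I X S : Type*} [Fintype I] [Fintype S] [DecidableEq S]
    (H : I → X → S) : Prop :=
  ∀ x x' : X, x ≠ x' →
    ((Finset.univ.filter fun i => H i x = H i x').card : ℝ) / (Fintype.card I : ℝ)
      ≤ 1 / (Fintype.card S : ℝ)

/-- Expectation of the security over the uniformly random hash function. -/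
noncomputable def expSecurity {I X Z S : Type*} [Fintype I] [Fintype X] [Fintype Z]
    [Fintype S] [DecidableEq S] (H : I → X → S) (P : X × Z → ℝ) : ℝ :=
  (Fintype.card I : ℝ)⁻¹ * ∑ i, security (H i) P

/-- Conditional Rényi entropy of order 2 relative to `R`:
`H_2(P|R) = -log ∑_{x, z ∈ supp R} P(x,z)² / R(z)`. -/
noncomputable def H2cond {X Z : Type*} [Fintype X] [Fintype Z]
    (P : X × Z → ℝ) (R : Z → ℝ) : ℝ :=
  - Real.log (∑ xz : X × Z, if R xz.2 ≠ 0 then P xz ^ 2 / R xz.2 else 0)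

/-- Conditional min-entropy relative to `R`:
`H_min(P|R) = -log max_{x, z ∈ supp R} P(x,z)/R(z)`. -/
noncomputable def Hmin {X Z : Type*} (P : X × Z → ℝ) (R : Z → ℝ) : ℝ :=
  - Real.log (sSup {v : ℝ | ∃ x z, R z ≠ 0 ∧ v = P (x, z) / R z})

/-- Smooth min-entropy over sub-normalized functions. -/
noncomputable def barHminEps {X Z : Type*} [Fintype X] [Fintype Z] (ε : ℝ)
    (P : X × Z → ℝ) (R : Z → ℝ) : ℝ :=
  sSup {h : ℝ | ∃ Q : X × Z → ℝ, Subnormalized Q ∧ vdist P Q ≤ ε ∧ h = Hmin Q R}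

/-- Smooth min-entropy over normalized distributions. -/
noncomputable def HminEps {X Z : Type*} [Fintype X] [Fintype Z] (ε : ℝ)
    (P : X × Z → ℝ) (R : Z → ℝ) : ℝ :=
  sSup {h : ℝ | ∃ Q : X × Z → ℝ, IsDist Q ∧ vdist P Q ≤ ε ∧ h = Hmin Q R}

/-- Conditional inf-spectral entropy
`H_s^ε(P|R) = sup{r : P{(x,z) : -log(P(x,z)/R(z)) ≤ r} ≤ ε}`. -/
noncomputable def Hspec {X Z : Type*} [Fintype X] [Fintype Z] (ε : ℝ)
    (P : X × Z → ℝ) (R : Z → ℝ) : ℝ :=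
  sSup {r : ℝ |
    (∑ xz : X × Z, if - Real.log (P xz / R xz.2) ≤ r then P xz else 0) ≤ ε}

/-- Maximal key length `ℓ(P,ε) = sup{log|S| : ∃ f : X → S, d(f|P) ≤ ε}`. -/
noncomputable def keyLen {X Z : Type*} [Fintype X] [Fintype Z]
    (P : X × Z → ℝ) (ε : ℝ) : ℝ :=
  sSup {l : ℝ | ∃ m : ℕ, 0 < m ∧ l = Real.log m ∧ ∃ f : X → Fin m, security f P ≤ ε}

/-- `φ(ρ|P) = log ∑_{z ∈ supp P_Z} P_Z(z) (∑_x P_{X|Z}(x|z)^{1/(1-ρ)})^{1-ρ}`. -/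
noncomputable def phi {X Z : Type*} [Fintype X] [Fintype Z] (ρ : ℝ) (P : X × Z → ℝ) : ℝ :=
  Real.log (∑ z, if margZ P z ≠ 0 then
    margZ P z * (∑ x, (P (x, z) / margZ P z) ^ ((1 : ℝ) / (1 - ρ))) ^ (1 - ρ) else 0)

/-- Conditional Rényi entropy of order `1+θ` relative to `R`:
`H_{1+θ}(P|R) = -(1/θ) log ∑_{x, z ∈ supp R} R(z) (P(x,z)/R(z))^{1+θ}`. -/
noncomputable def Hrenyi {X Z : Type*} [Fintype X] [Fintype Z] (θ : ℝ)
    (P : X × Z → ℝ) (R : Z → ℝ) : ℝ :=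
  -(1 / θ) * Real.log (∑ xz : X × Z,
    if R xz.2 ≠ 0 then R xz.2 * (P xz / R xz.2) ^ (1 + θ) else 0)

/-- Expanding the squared deviation from uniform of the key distribution turns it into a
collision sum. -/
lemma sum_sq_deviation {X S : Type*} [Fintype X] [Fintype S] [DecidableEq S] [Nonempty S]
    (f : X → S) (q : X → ℝ) :
    ∑ s, ((∑ x, if f x = s then q x else 0) - (Fintype.card S : ℝ)⁻¹ * ∑ x, q x) ^ 2
      = (∑ x, ∑ y, if f x = f y then q x * q y else 0)
        - (Fintype.card S : ℝ)⁻¹ * (∑ x, q x) ^ 2 := by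
  have hS : (Fintype.card S : ℝ) ≠ 0 := by exact_mod_cast Fintype.card_ne_zero
  have h1 : ∑ s, (∑ x, if f x = s then q x else 0) = ∑ x, q x := by
    rw [Finset.sum_comm]; simp
  have h2 : ∑ s, (∑ x, if f x = s then q x else 0) ^ 2
      = ∑ x, ∑ y, if f x = f y then q x * q y else 0 := by
    simp_rw [sq, Finset.sum_mul_sum]
    rw [Finset.sum_comm]
    refine Finset.sum_congr rfl fun x _ => ?_
    rw [Finset.sum_comm]
    refine Finset.sum_congr rfl fun y _ => ?_
    simp [ite_mul, eq_comm]
  simp_rw [sub_sq, Finset.sum_add_distrib, Finset.sum_sub_distrib, h2]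
  rw [← Finset.sum_mul, ← Finset.mul_sum, h1]
  simp only [Finset.sum_const, Finset.card_univ, nsmul_eq_mul]
  field_simp
  ring

/-- Averaged over a universal-2 family, the squared deviation from uniform is at most the
collision mass `∑ q x ^ 2` on the diagonal. -/
lemma sum_sum_sq_deviation_le {I X S : Type*} [Fintype I] [Nonempty I] [Fintype X] [Fintype S]
    [DecidableEq S] [Nonempty S] (H : I → X → S) (hH : Universal2 H)
    (q : X → ℝ) (hq : ∀ x, 0 ≤ q x) :
    ∑ i, ∑ s, ((∑ x, if H i x = s then q x else 0) - (Fintype.card S : ℝ)⁻¹ * ∑ x, q x) ^ 2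
      ≤ Fintype.card I * ∑ x, q x ^ 2 := by
  classical
  have hI : (0 : ℝ) < Fintype.card I := by exact_mod_cast Fintype.card_pos
  have key : ∀ x y, (∑ i, if H i x = H i y then q x * q y else 0)
      ≤ Fintype.card I * ((Fintype.card S : ℝ)⁻¹ * (q x * q y)
        + if x = y then q x ^ 2 else 0) := by
    intro x y
    have hxy : 0 ≤ q x * q y := mul_nonneg (hq x) (hq y)
    rw [← Finset.sum_filter, Finset.sum_const, nsmul_eq_mul]
    by_cases h : x = y
    · subst h
      have : 0 ≤ (Fintype.card I : ℝ) * ((Fintype.card S : ℝ)⁻¹ * (q x * q x)) := by positivity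
      simp only [Finset.filter_true, Finset.card_univ, if_true]
      nlinarith
    · have := hH x y h
      rw [div_le_iff₀ hI] at this
      rw [if_neg h, add_zero]
      calc _ ≤ (1 / (Fintype.card S : ℝ) * Fintype.card I) * (q x * q y) := by gcongr
        _ = _ := by ring
  simp_rw [sum_sq_deviation, Finset.sum_sub_distrib]
  have h3 : ∑ i, ∑ x, ∑ y, (if H i x = H i y then q x * q y else 0)
      ≤ ∑ x, ∑ y, (Fintype.card I : ℝ) * ((Fintype.card S : ℝ)⁻¹ * (q x * q y)
        + if x = y then q x ^ 2 else 0) := by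
    rw [Finset.sum_comm]
    refine Finset.sum_le_sum fun x _ => ?_
    rw [Finset.sum_comm]
    exact Finset.sum_le_sum fun y _ => key x y
  have h4 : ∑ x, ∑ y, (Fintype.card I : ℝ) * ((Fintype.card S : ℝ)⁻¹ * (q x * q y)
        + if x = y then q x ^ 2 else 0)
      = Fintype.card I * ((Fintype.card S : ℝ)⁻¹ * (∑ x, q x) ^ 2 + ∑ x, q x ^ 2) := by
    simp_rw [← Finset.mul_sum, Finset.sum_add_distrib, ← Finset.mul_sum]
    simp only [sq, Finset.sum_mul_sum, ← Finset.mul_sum, Finset.sum_ite_eq, Finset.mem_univ, if_true]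
  simp only [Finset.sum_const, Finset.card_univ, nsmul_eq_mul]
  linarith

/-- Leftover hash lemma relative to `R`. Terms with `R z = 0` vanish on the right because
`x / 0 = 0`, and on the left because of `hQR`. -/
lemma sq_two_mul_expSecurity_le {I X Z S : Type*} [Fintype I] [Nonempty I] [Fintype X]
    [Fintype Z] [Fintype S] [DecidableEq S] [Nonempty S]
    (H : I → X → S) (hH : Universal2 H) (Q : X × Z → ℝ) (hQ : ∀ a, 0 ≤ Q a)
    (R : Z → ℝ) (hR : IsDist R) (hQR : ∀ x z, R z = 0 → Q (x, z) = 0) :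
    (2 * expSecurity H Q) ^ 2
      ≤ Fintype.card S * ∑ z, ∑ x, Q (x, z) ^ 2 / R z := by
  have hI : (0 : ℝ) < Fintype.card I := by exact_mod_cast Fintype.card_pos
  set D : I → S → Z → ℝ := fun i s z => (∑ x, if H i x = s then Q (x, z) else 0)
    - (Fintype.card S : ℝ)⁻¹ * ∑ x, Q (x, z) with hD
  have hD0 : ∀ i s z, R z = 0 → D i s z = 0 := by
    intro i s z hz
    simp [hD, hQR _ z hz]
  have hE : 2 * expSecurity H Q
      = (Fintype.card I : ℝ)⁻¹ * ∑ p : I × S × Z, |D p.1 p.2.1 p.2.2| := by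
    simp only [expSecurity, security, vdist, keyDist, margZ, hD]
    rw [← Finset.mul_sum, Fintype.sum_prod_type]
    ring
  have hCS := Finset.sum_sq_le_sum_mul_sum_of_sq_le_mul (Finset.univ : Finset (I × S × Z))
    (r := fun p => |D p.1 p.2.1 p.2.2|) (f := fun p => R p.2.2)
    (g := fun p => D p.1 p.2.1 p.2.2 ^ 2 / R p.2.2)
    (fun p _ => hR.1 _) (fun p _ => div_nonneg (sq_nonneg _) (hR.1 _))
    (fun p _ => by
      rw [sq_abs]
      by_cases h : R p.2.2 = 0
      · simp [h, hD0 _ _ _ h]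
      · exact (mul_div_cancel₀ _ h).ge)
  have hRs : ∑ p : I × S × Z, R p.2.2 = Fintype.card I * Fintype.card S := by
    simp [Fintype.sum_prod_type, hR.2]
  have hG : ∑ p : I × S × Z, D p.1 p.2.1 p.2.2 ^ 2 / R p.2.2
      ≤ Fintype.card I * ∑ z, ∑ x, Q (x, z) ^ 2 / R z := by
    have e : ∑ p : I × S × Z, D p.1 p.2.1 p.2.2 ^ 2 / R p.2.2
        = ∑ z, (∑ i, ∑ s, D i s z ^ 2) / R z := by
      simp_rw [Fintype.sum_prod_type, Finset.sum_div]
      rw [Finset.sum_comm' (t' := Finset.univ) (s' := fun _ => Finset.univ) (by simp)]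
      rw [Finset.sum_comm]
      simp_rw [fun i : I => Finset.sum_comm (s := (Finset.univ : Finset S))
        (t := (Finset.univ : Finset Z)) (f := fun s z => D i s z ^ 2 / R z)]
      rw [Finset.sum_comm]
    rw [e, Finset.mul_sum]
    refine Finset.sum_le_sum fun z _ => ?_
    rw [← Finset.sum_div, ← mul_div_assoc]
    exact div_le_div_of_nonneg_right
      (sum_sum_sq_deviation_le H hH (fun x => Q (x, z)) fun x => hQ _) (hR.1 z)
  rw [hE, mul_pow]
  calc _ ≤ ((Fintype.card I : ℝ)⁻¹) ^ 2 * ((Fintype.card I * Fintype.card S)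
        * (Fintype.card I * ∑ z, ∑ x, Q (x, z) ^ 2 / R z)) := by
        rw [hRs] at hCS
        refine mul_le_mul_of_nonneg_left (hCS.trans ?_) (by positivity)
        exact mul_le_mul_of_nonneg_left hG (by positivity)
    _ = _ := by field_simp

/-- Below the threshold `p / ρ < e^{-r}`, one factor `(p / ρ) ^ (1 - θ)` of the order-2 term can be
traded for `e^{-(1-θ) r}`. -/
lemma sq_div_le_of_lt_neg_log {p ρ r θ : ℝ} (hp : 0 < p) (hρ : 0 < ρ) (hθ : θ ≤ 1)
    (h : r < -Real.log (p / ρ)) :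
    p ^ 2 / ρ ≤ ρ * (p / ρ) ^ (1 + θ) * Real.exp (-(1 - θ) * r) := by
  have ht : 0 < p / ρ := div_pos hp hρ
  have e : p ^ 2 / ρ = ρ * (p / ρ) ^ (1 + θ) * (p / ρ) ^ (1 - θ) := by
    rw [mul_assoc, ← Real.rpow_add ht, show 1 + θ + (1 - θ) = (2 : ℕ) by norm_num,
      Real.rpow_natCast]
    field_simp
  rw [e, Real.rpow_def_of_pos ht (1 - θ)]
  refine mul_le_mul_of_nonneg_left (Real.exp_le_exp.2 ?_)
    (mul_nonneg hρ.le (Real.rpow_nonneg ht.le _))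
  nlinarith

/-- Smoothed Rényi hash bound (key step of Theorem 6). For `θ = 0`
the term `θ * H_{1+θ}` is `0` (which indeed holds since `1/0 = 0` in Lean). -/
theorem smoothed_renyi_hash_bound {I X Z S : Type*} [Fintype I] [Nonempty I] [Fintype X]
    [Fintype Z] [Fintype S] [DecidableEq S]
    (H : I → X → S) (hH : Universal2 H)
    (P : X × Z → ℝ) (hP : IsDist P)
    (R : Z → ℝ) (hR : IsDist R)
    (hsupp : ∀ z, margZ P z ≠ 0 → R z ≠ 0)
    (r θ : ℝ) (hθ0 : 0 ≤ θ) (hθ1 : θ ≤ 1) :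
    expSecurity H (fun xz => if r < - Real.log (P xz / R xz.2) then P xz else 0)
      ≤ Real.sqrt ((Fintype.card S : ℝ) *
          Real.exp (- (θ * Hrenyi θ P R) - (1 - θ) * r)) := by
  have : Nonempty X := by
    by_contra hX
    rw [not_nonempty_iff] at hX
    simpa using hP.2
  have : Nonempty S := ⟨H (Classical.arbitrary I) (Classical.arbitrary X)⟩
  have hPR : ∀ x z, R z = 0 → P (x, z) = 0 := by
    intro x z hz
    have h0 : ∑ x, P (x, z) = 0 := by
      by_contra h
      exact hsupp z h hz
    exact (Finset.sum_eq_zero_iff_of_nonneg fun x _ => hP.1 (x, z)).1 h0 x (Finset.mem_univ x)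
  set Q : X × Z → ℝ := fun xz => if r < - Real.log (P xz / R xz.2) then P xz else 0 with hQdef
  have hQ0 : ∀ a, 0 ≤ Q a := fun a => by
    simp only [hQdef]; split_ifs
    exacts [hP.1 a, le_rfl]
  have hQR : ∀ x z, R z = 0 → Q (x, z) = 0 := fun x z hz => by simp [hQdef, hPR x z hz]
  set T : ℝ := ∑ xz : X × Z, if R xz.2 ≠ 0 then R xz.2 * (P xz / R xz.2) ^ (1 + θ) else 0 with hT
  have hterm : ∀ a : X × Z,
      0 ≤ if R a.2 ≠ 0 then R a.2 * (P a / R a.2) ^ (1 + θ) else 0 := fun a => by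
    split_ifs
    exacts [mul_nonneg (hR.1 _) (Real.rpow_nonneg (div_nonneg (hP.1 _) (hR.1 _)) _), le_rfl]
  have hTpos : 0 < T := by
    obtain ⟨a, -, ha⟩ : ∃ a ∈ (Finset.univ : Finset (X × Z)), P a ≠ 0 :=
      Finset.exists_ne_zero_of_sum_ne_zero (by rw [hP.2]; exact one_ne_zero)
    have hRa : R a.2 ≠ 0 := fun h => ha (hPR a.1 a.2 h)
    refine Finset.sum_pos' (fun a _ => hterm a) ⟨a, Finset.mem_univ a, ?_⟩
    rw [if_pos hRa]
    have h1 : 0 < R a.2 := lt_of_le_of_ne (hR.1 _) hRa.symm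
    have h2 : 0 < P a := lt_of_le_of_ne (hP.1 _) ha.symm
    positivity
  have hexp : T = Real.exp (-(θ * Hrenyi θ P R)) := by
    rcases hθ0.eq_or_lt with h | h
    · -- At `θ = 0` the Rényi sum is the total mass of `P`.
      have : T = 1 := by
        rw [← hP.2]
        refine Finset.sum_congr rfl fun a _ => ?_
        split_ifs with ha
        · rw [← h, add_zero, Real.rpow_one, mul_div_cancel₀ _ ha]
        · exact (hPR a.1 a.2 (not_not.1 ha)).symm
      rw [this, ← h]; simp
    · have : -(θ * Hrenyi θ P R) = Real.log T := by
        simp only [Hrenyi, ← hT]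
        field_simp
      rw [this, Real.exp_log hTpos]
  have hsum : ∑ z, ∑ x, Q (x, z) ^ 2 / R z ≤ T * Real.exp (-(1 - θ) * r) := by
    rw [Finset.sum_comm, ← Fintype.sum_prod_type' (f := fun x z => Q (x, z) ^ 2 / R z),
      hT, Finset.sum_mul]
    refine Finset.sum_le_sum fun a _ => ?_
    have hnn := mul_nonneg (hterm a) (Real.exp_pos (-(1 - θ) * r)).le
    by_cases hQa : Q a = 0
    · simpa [hQa] using hnn
    · have hlt : r < - Real.log (P a / R a.2) := by
        by_contra h
        exact hQa (if_neg h)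
      have hQP : Q a = P a := if_pos hlt
      have hRa : R a.2 ≠ 0 := fun h => hQa (hQR a.1 a.2 h)
      have hPa : P a ≠ 0 := hQP ▸ hQa
      rw [if_pos hRa]
      change Q a ^ 2 / R a.2 ≤ _
      rw [hQP]
      exact sq_div_le_of_lt_neg_log (lt_of_le_of_ne (hP.1 a) hPa.symm)
        (lt_of_le_of_ne (hR.1 _) hRa.symm) hθ1 hlt
  refine Real.le_sqrt_of_sq_le ?_
  have hmain := sq_two_mul_expSecurity_le H hH Q hQ0 R hR hQR
  have hle : (Fintype.card S : ℝ) * ∑ z, ∑ x, Q (x, z) ^ 2 / R z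
      ≤ Fintype.card S * Real.exp (- (θ * Hrenyi θ P R) - (1 - θ) * r) := by
    refine mul_le_mul_of_nonneg_left (hsum.trans_eq ?_) (Nat.cast_nonneg _)
    rw [hexp, ← Real.exp_add]
    congr 1
    ring
  nlinarith [sq_nonneg (expSecurity H Q)]
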